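/- Fix m ≥ 1 and let c = c_{m−1} c_{m−2} … c_0 be an OT-admissible word of length m over Fin 8, with position i counted from the right and lexicographic comparison of words performed on positions m−1, m−2, … (leftmost most significant) in the level order 0 < 1 < ⋯ < 7. Let g(c) be the number of OT-admissible words of length m that are lexicographically smaller than c. For each i, let a_i be the level of c_i, and define y_i = (y_{i,1},…,y_{i,5}) ∈ {0,1}⁵ by the FIRST matching rule below, where β1' ranges over {0,1,4}, β2' over {3,6,7}, β3 over {3,6}, β4 over {1,4}, γ1 over {6,7}, γ2 over {4,5}, γ3 over {3,4}, and any condition referring to a position ≥ m is false: (1) (c_{i+2},c_{i+1},c_i) = (β1',β3,2): y_i = (0,1,0,0,0); (2) (c_{i+2},c_{i+1},c_i) = (β1',β3,3): (0,1,1,0,1); (3) (c_{i+2},c_{i+1},c_i) = (β1',β3,γ1): (1,0,1,0,1); (4) (c_{i+2},c_{i+1},c_i) = (β2',β4,γ2): (0,1,0,0,0); (5) (c_{i+1},c_i) = (β1',3): (0,0,1,0,0); (6) (c_{i+1},c_i) = (β1',γ2): (0,1,0,0,1); (7) (c_{i+1},c_i) = (β1',6): (0,1,1,1,0); (8) (c_{i+1},c_i)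 = (β1',7): (1,0,0,1,1); (9) (c_{i+1},c_i) = (β2',2): (0,0,1,0,1); (10) (c_{i+1},c_i) = (β2',γ3): (0,1,0,1,0); (11) (c_{i+1},c_i) = (β2',γ1): (1,0,0,1,1); (12) (c_{i+1},c_i) = (2,2): (0,1,0,0,0); (13) (c_{i+1},c_i) = (2,3): (0,1,1,0,1); (14) (c_{i+1},c_i) = (2,γ1): (1,0,1,0,1); (15) (c_{i+1},c_i) = (5,γ2): (0,1,0,0,0); otherwise (16) if c_i ∈ {0,1,2}: (0,0,0,0,0); (17) if c_i ∈ {3,4,5}: (0,0,1,0,1); (18) if c_i ∈ {6,7}: (0,1,0,1,0). Set θ_{i,1} = 4y_{i,1} + 2y_{i,2} + y_{i,3} and θ_{i,2} = 2y_{i,4} + y_{i,5}. Then, as an identity of rational numbers, g(c) = Σ_{i=0}^{m−1} [ ((a_i − θ_{i,1})/6)·N8(i+1) + ((θ_{i,1} + 3θ_{i,2} − a_i)/6)·N8(i) ]. -/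

import Mathlib

namespace OTLOCO

def B1 : Finset (Fin 8) := {0, 1, 4, 5}
def B2 : Finset (Fin 8) := {2, 3, 6, 7}

def OTpair (a b : Fin 8) : Prop :=
  (a = 2 ∧ b ∈ B1) ∨ (a ∈ B1 ∧ b = 2) ∨ (a = 5 ∧ b ∈ B2) ∨ (a ∈ B2 ∧ b = 5)

def OTtriple (a x b : Fin 8) : Prop :=
  (a ∈ ({0, 1, 4} : Finset (Fin 8)) ∧ x ∈ ({3, 6} : Finset (Fin 8)) ∧
    b ∈ ({0, 1, 4} : Finset (Fin 8))) ∨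
  (a ∈ ({3, 6, 7} : Finset (Fin 8)) ∧ x ∈ ({1, 4} : Finset (Fin 8)) ∧
    b ∈ ({3, 6, 7} : Finset (Fin 8)))

instance (a b : Fin 8) : Decidable (OTpair a b) := by unfold OTpair; infer_instance
instance (a x b : Fin 8) : Decidable (OTtriple a x b) := by unfold OTtriple; infer_instance

/-- Right-indexed OT-admissibility: `c i` is the symbol at position `i` counted from the
right (`c (m−1)` is the leftmost symbol), and forbidden patterns are read left-to-right,
i.e. from higher positions towards lower positions. -/
def OTadmR {m : ℕ} (c : Fin m → Fin 8) : Prop :=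
  (∀ i j : Fin m, (i : ℕ) = (j : ℕ) + 1 → ¬ OTpair (c i) (c j)) ∧
  (∀ i j k : Fin m, (i : ℕ) = (k : ℕ) + 2 → (j : ℕ) = (k : ℕ) + 1 →
    ¬ OTtriple (c i) (c j) (c k))

instance {m : ℕ} : DecidablePred (@OTadmR m) := fun c => by
  unfold OTadmR; infer_instance

/-- Number of OT-admissible words of length `m`, with the convention `N8 0 = 2`. -/
def N8 (m : ℕ) : ℕ :=
  if m = 0 then 2
  else (Finset.univ.filter (fun w : Fin m → Fin 8 => OTadmR w)).card

/-- Lexicographic order on right-indexed words: the leftmost (highest-index) position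
is the most significant, and symbols are compared in the level order `0 < 1 < ⋯ < 7`. -/
def lexLt {m : ℕ} (u v : Fin m → Fin 8) : Prop :=
  ∃ i : Fin m, u i < v i ∧ ∀ j : Fin m, i < j → u j = v j

instance {m : ℕ} (u v : Fin m → Fin 8) : Decidable (lexLt u v) := by
  unfold lexLt; infer_instance

/-- The lexicographic index of `c`: the number of OT-admissible words of length `m`
that are lexicographically smaller than `c`. -/
def gIndex {m : ℕ} (c : Fin m → Fin 8) : ℕ :=
  (Finset.univ.filter (fun w : Fin m → Fin 8 => OTadmR w ∧ lexLt w c)).card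

/-- The symbol at (right-counted) position `k`, or `none` if `k ≥ m`. -/
def copt {m : ℕ} (c : Fin m → Fin 8) (k : ℕ) : Option (Fin 8) :=
  if h : k < m then some (c ⟨k, h⟩) else none

/-- `oin o s` holds when `o = some x` for some `x ∈ s`; in particular any membership
condition on a nonexistent position is false. -/
def oin (o : Option (Fin 8)) (s : Finset (Fin 8)) : Prop := ∃ x ∈ s, o = some x

instance (o : Option (Fin 8)) (s : Finset (Fin 8)) : Decidable (oin o s) := by
  unfold oin; infer_instance

/-- The merging-variable vector `(y₁,y₂,y₃,y₄,y₅)` for a symbol with left context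
`(c_{i+2}, c_{i+1})` (as options) and value `c_i`, given by the first matching rule. -/
def yRule (c2 c1 : Option (Fin 8)) (c0 : Fin 8) : ℕ × ℕ × ℕ × ℕ × ℕ :=
  if oin c2 {0, 1, 4} ∧ oin c1 {3, 6} ∧ c0 = 2 then (0, 1, 0, 0, 0)
  else if oin c2 {0, 1, 4} ∧ oin c1 {3, 6} ∧ c0 = 3 then (0, 1, 1, 0, 1)
  else if oin c2 {0, 1, 4} ∧ oin c1 {3, 6} ∧ c0 ∈ ({6, 7} : Finset (Fin 8)) then
    (1, 0, 1, 0, 1)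
  else if oin c2 {3, 6, 7} ∧ oin c1 {1, 4} ∧ c0 ∈ ({4, 5} : Finset (Fin 8)) then
    (0, 1, 0, 0, 0)
  else if oin c1 {0, 1, 4} ∧ c0 = 3 then (0, 0, 1, 0, 0)
  else if oin c1 {0, 1, 4} ∧ c0 ∈ ({4, 5} : Finset (Fin 8)) then (0, 1, 0, 0, 1)
  else if oin c1 {0, 1, 4} ∧ c0 = 6 then (0, 1, 1, 1, 0)
  else if oin c1 {0, 1, 4} ∧ c0 = 7 then (1, 0, 0, 1, 1)
  else if oin c1 {3, 6, 7} ∧ c0 = 2 then (0, 0, 1, 0, 1)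
  else if oin c1 {3, 6, 7} ∧ c0 ∈ ({3, 4} : Finset (Fin 8)) then (0, 1, 0, 1, 0)
  else if oin c1 {3, 6, 7} ∧ c0 ∈ ({6, 7} : Finset (Fin 8)) then (1, 0, 0, 1, 1)
  else if c1 = some 2 ∧ c0 = 2 then (0, 1, 0, 0, 0)
  else if c1 = some 2 ∧ c0 = 3 then (0, 1, 1, 0, 1)
  else if c1 = some 2 ∧ c0 ∈ ({6, 7} : Finset (Fin 8)) then (1, 0, 1, 0, 1)
  else if c1 = some 5 ∧ c0 ∈ ({4, 5} : Finset (Fin 8)) then (0, 1, 0, 0, 0)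
  else if c0 ∈ ({0, 1, 2} : Finset (Fin 8)) then (0, 0, 0, 0, 0)
  else if c0 ∈ ({3, 4, 5} : Finset (Fin 8)) then (0, 0, 1, 0, 1)
  else (0, 1, 0, 1, 0)

def otY {m : ℕ} (c : Fin m → Fin 8) (i : Fin m) : ℕ × ℕ × ℕ × ℕ × ℕ :=
  yRule (copt c ((i : ℕ) + 2)) (copt c ((i : ℕ) + 1)) (c i)

/-- `θ_{i,1} = 4y_{i,1} + 2y_{i,2} + y_{i,3}`. -/
def otTheta1 {m : ℕ} (c : Fin m → Fin 8) (i : Fin m) : ℕ :=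
  4 * (otY c i).1 + 2 * (otY c i).2.1 + (otY c i).2.2.1

/-- `θ_{i,2} = 2y_{i,4} + y_{i,5}`. -/
def otTheta2 {m : ℕ} (c : Fin m → Fin 8) (i : Fin m) : ℕ :=
  2 * (otY c i).2.2.2.1 + (otY c i).2.2.2.2

/-!
Enumerative coding: in a constrained system read from the left, the words below `c` are sorted
according to the first position, from the left, where they differ from `c`. So the index of `c` is
the sum over positions `i` and over admissible symbols `y < c i` of the number of ways to fill the
`i` positions to the right of `y`.

For the OT constraint this last number depends only on whether `y` is *free* or *restricted* in its
context. After a free symbol 4 free and 3 restricted ones may follow, after a restricted symbol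
3 and 1, and a first symbol is one of 6 free and 2 restricted ones. Hence the numbers `aₙ` and `bₙ`
of completions of length `n` satisfy `bₙ = N8 n / 2` and `aₙ = (N8 (n + 1) - N8 n) / 6`. The
merging rules are built so that, below `x = c i`, there are `x - θ₁` free symbols and `θ₂`
restricted ones, and `(x - θ₁) aₙ + θ₂ bₙ` is the summand of the theorem.
-/

section EnumerativeCoding

open Finset

theorem sum_filter_ite_const {ι : Type*} [Fintype ι] (P Q : ι → Prop) [DecidablePred P]
    [DecidablePred Q] (a b : ℕ) :
    ∑ x with P x, (if Q x then a else b) = #{x | P x ∧ Q x} * a + #{x | P x ∧ ¬ Q x} * b := by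
  simp [sum_ite, filter_filter]

theorem card_filter_snoc {α : Type*} [Fintype α] {n : ℕ} (P : (Fin (n + 1) → α) → Prop)
    [DecidablePred P] :
    #{w | P w} = ∑ x, #{w : Fin n → α | P (Fin.snoc w x : Fin (n + 1) → α)} := by
  simp only [card_filter]
  rw [← (Fin.snocEquiv fun _ => α).sum_comp, Fintype.sum_prod_type]
  rfl

theorem toColex_snoc_lt_toColex_snoc {α : Type*} [LT α] {n : ℕ} (u v : Fin n → α) (x y : α) :
    toColex (Fin.snoc u x : Fin (n + 1) → α) < toColex (Fin.snoc v y : Fin (n + 1) → α) ↔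
      x < y ∨ x = y ∧ toColex u < toColex v := by
  change (∃ i, _ ∧ _) ↔ _ ∨ _ ∧ ∃ i, _ ∧ _
  simp only [Pi.toColex_apply, Fin.exists_fin_succ', Fin.forall_fin_succ', Fin.snoc_castSucc,
    Fin.snoc_last, gt_iff_lt, Fin.castSucc_lt_castSucc_iff, Fin.castSucc_lt_last,
    (Fin.castSucc_lt_last _).not_gt, lt_irrefl, forall_const, false_imp_iff, implies_true, true_and]
  grind

/-- A deterministic constrained system (labelled transition graph): in state `s` a symbol `x` with
`Allowed s x` may be written, and then the state is `next s x`. -/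
structure ConstrainedSystem (α σ : Type*) where
  next : σ → α → σ
  Allowed : σ → α → Prop

namespace ConstrainedSystem

variable {α σ : Type*} (M : ConstrainedSystem α σ)

/-- The state in which position `i` of `w` is written, starting in state `s`. Words are written
from the left, that is, from position `Fin.last` down to position `0`. -/
def stateAt : {n : ℕ} → σ → (Fin n → α) → Fin n → σ
  | 0, _, _ => Fin.elim0
  | _ + 1, s, w => Fin.snoc (stateAt (M.next s (w (Fin.last _))) (Fin.init w)) s

/-- The words that the system can write starting in state `s`. -/
def IsAdmissible {n : ℕ} (s : σ) (w : Fin n → α) : Prop :=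
  ∀ i, M.Allowed (M.stateAt s w i) (w i)

instance [∀ s, DecidablePred (M.Allowed s)] {n : ℕ} (s : σ) :
    DecidablePred (M.IsAdmissible (n := n) s) :=
  fun w => inferInstanceAs (Decidable (∀ i, M.Allowed (M.stateAt s w i) (w i)))

@[simp]
theorem stateAt_last {n : ℕ} (s : σ) (w : Fin (n + 1) → α) :
    M.stateAt s w (Fin.last n) = s := by
  simp [stateAt]

@[simp]
theorem stateAt_snoc_castSucc {n : ℕ} (s : σ) (w : Fin n → α) (x : α) (i : Fin n) :
    M.stateAt s (Fin.snoc w x : Fin (n + 1) → α) i.castSucc = M.stateAt (M.next s x) w i := by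
  simp [stateAt]

theorem stateAt_castSucc {n : ℕ} (s : σ) (w : Fin (n + 1) → α) (i : Fin n) :
    M.stateAt s w i.castSucc = M.next (M.stateAt s w i.succ) (w i.succ) := by
  induction n generalizing s with
  | zero => exact i.elim0
  | succ n ih =>
    induction w using Fin.snocCases with
    | _ w x =>
      induction i using Fin.lastCases with
      | last => simp
      | cast j => simp only [Fin.succ_castSucc, stateAt_snoc_castSucc, Fin.snoc_castSucc, ih]

theorem isAdmissible_snoc {n : ℕ} (s : σ) (w : Fin n → α) (x : α) :
    M.IsAdmissible s (Fin.snoc w x : Fin (n + 1) → α) ↔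
      M.Allowed s x ∧ M.IsAdmissible (M.next s x) w := by
  simp [IsAdmissible, Fin.forall_fin_succ', and_comm]

variable [Fintype α] [∀ s, DecidablePred (M.Allowed s)]

/-- The number of words of length `n` that the system can write starting in state `s`. -/
def count (n : ℕ) (s : σ) : ℕ := #{w : Fin n → α | M.IsAdmissible s w}

@[simp]
theorem count_zero (s : σ) : M.count 0 s = 1 := by
  simp [count, IsAdmissible]

theorem count_succ (n : ℕ) (s : σ) :
    M.count (n + 1) s = ∑ x with M.Allowed s x, M.count n (M.next s x) := by
  rw [count, card_filter_snoc, sum_filter]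
  refine sum_congr rfl fun x _ => ?_
  by_cases hx : M.Allowed s x <;> simp [isAdmissible_snoc, hx, count]

variable [Preorder α]

open Classical in
/-- The number of words, admissible from state `s`, that precede `c` in the dictionary order.
Since the leftmost letter has the highest index, this is the colexicographic order. -/
noncomputable def rank {n : ℕ} (s : σ) (c : Fin n → α) : ℕ :=
  #{w | M.IsAdmissible s w ∧ toColex w < toColex c}

theorem rank_snoc [DecidableLT α] {n : ℕ} {s : σ} {x : α} (hx : M.Allowed s x) (c : Fin n → α) :
    M.rank s (Fin.snoc c x : Fin (n + 1) → α) =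
      ∑ y with M.Allowed s y ∧ y < x, M.count n (M.next s y) + M.rank (M.next s x) c := by
  classical
  have hsplit (y : α) :
      #{w : Fin n → α | M.IsAdmissible s (Fin.snoc w y : Fin (n + 1) → α) ∧
          toColex (Fin.snoc w y : Fin (n + 1) → α) < toColex (Fin.snoc c x)} =
        (if M.Allowed s y ∧ y < x then M.count n (M.next s y) else 0) +
          if y = x then M.rank (M.next s x) c else 0 := by
    simp only [isAdmissible_snoc, toColex_snoc_lt_toColex_snoc]
    obtain rfl | hne := eq_or_ne y x
    · simp [hx, rank]
    · by_cases hy : M.Allowed s y ∧ y < x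
      · simp [hy, hne, count]
      · simp [hne, and_right_comm, hy]
  rw [rank, card_filter_snoc]
  simp only [hsplit, sum_add_distrib, sum_filter, sum_ite_eq', mem_univ, if_true]

theorem rank_eq_sum [DecidableLT α] {n : ℕ} {s : σ} {c : Fin n → α} (hc : M.IsAdmissible s c) :
    M.rank s c = ∑ i : Fin n, ∑ y with M.Allowed (M.stateAt s c i) y ∧ y < c i,
      M.count i (M.next (M.stateAt s c i) y) := by
  induction n generalizing s with
  | zero =>
    have hmin (w : Fin 0 → α) : ¬ toColex w < toColex c := fun ⟨i, _⟩ => i.elim0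
    simp only [rank, hmin, and_false, filter_false, card_empty, Fin.sum_univ_zero]
  | succ n ih =>
    induction c using Fin.snocCases with
    | _ c x =>
      obtain ⟨hx, hc⟩ := (M.isAdmissible_snoc s c x).1 hc
      rw [M.rank_snoc hx, ih hc, Fin.sum_univ_castSucc, add_comm]
      simp

end ConstrainedSystem

/-- The two symbols to the left of a position, farther one first, or `none` where there is no
such symbol. -/
abbrev Context : Type := Option (Fin 8) × Option (Fin 8)

/-- The OT constraint as a constrained system whose state is the context of the next symbol. -/
def otSystem : ConstrainedSystem (Fin 8) Context where
  next s x := (s.2, some x)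
  Allowed s x := (∀ b ∈ s.2, ¬ OTpair b x) ∧ ∀ a ∈ s.1, ∀ b ∈ s.2, ¬ OTtriple a b x

instance (s : Context) : DecidablePred (otSystem.Allowed s) := fun x =>
  inferInstanceAs (Decidable
    ((∀ b ∈ s.2, ¬ OTpair b x) ∧ ∀ a ∈ s.1, ∀ b ∈ s.2, ¬ OTtriple a b x))

/-- The contexts that leave only four choices for the next symbol, because their last symbol is
`2` or `5` or they are the first two symbols of a forbidden triple. All other contexts that have a
last symbol are *free* and leave seven choices. -/
def IsRestricted (s : Context) : Prop :=
  oin s.2 {2, 5} ∨ (oin s.1 {0, 1, 4} ∧ oin s.2 {3, 6}) ∨ (oin s.1 {3, 6, 7} ∧ oin s.2 {1, 4})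

instance : DecidablePred IsRestricted := fun s => by
  unfold IsRestricted; infer_instance

theorem mem_copt {m : ℕ} {c : Fin m → Fin 8} {k : ℕ} {x : Fin 8} :
    x ∈ copt c k ↔ ∃ h : k < m, c ⟨k, h⟩ = x := by
  unfold copt
  split_ifs with h <;> simp [h]

theorem copt_val {m : ℕ} (c : Fin m → Fin 8) (i : Fin m) : copt c i = some (c i) := by
  simp [copt]

theorem otSystem_stateAt {m : ℕ} (c : Fin m → Fin 8) (i : Fin m) :
    otSystem.stateAt (none, none) c i = (copt c (i + 2), copt c (i + 1)) := by
  cases m with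
  | zero => exact i.elim0
  | succ m =>
    induction i using Fin.reverseInduction with
    | last => simp [copt]
    | cast i ih =>
      rw [otSystem.stateAt_castSucc, ih]
      exact congrArg (Prod.mk _) (copt_val c i.succ).symm

theorem otadmR_iff_isAdmissible {m : ℕ} (c : Fin m → Fin 8) :
    OTadmR c ↔ otSystem.IsAdmissible (none, none) c := by
  have hpair : (∀ i j : Fin m, (i : ℕ) = j + 1 → ¬ OTpair (c i) (c j)) ↔
      ∀ i : Fin m, ∀ b ∈ copt c (i + 1), ¬ OTpair b (c i) := by
    simp only [mem_copt, forall_exists_index, forall_apply_eq_imp_iff, Fin.forall_iff]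
    grind
  have htriple : (∀ i j k : Fin m, (i : ℕ) = k + 2 → (j : ℕ) = k + 1 →
        ¬ OTtriple (c i) (c j) (c k)) ↔
      ∀ k : Fin m, ∀ a ∈ copt c (k + 2), ∀ b ∈ copt c (k + 1), ¬ OTtriple a b (c k) := by
    simp only [mem_copt, forall_exists_index, forall_apply_eq_imp_iff, Fin.forall_iff]
    grind
  rw [OTadmR, hpair, htriple, ← forall_and]
  exact forall_congr' fun i => by rw [otSystem_stateAt]; rfl

theorem lexLt_iff_toColex_lt {m : ℕ} (u v : Fin m → Fin 8) :
    lexLt u v ↔ toColex u < toColex v :=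
  exists_congr fun _ => and_comm

theorem gIndex_eq_rank {m : ℕ} (c : Fin m → Fin 8) :
    gIndex c = otSystem.rank (none, none) c := by
  classical
  rw [gIndex, ConstrainedSystem.rank]
  exact congrArg card <| filter_congr fun w _ =>
    and_congr (otadmR_iff_isAdmissible w) (lexLt_iff_toColex_lt w c)

mutual

/-- The number of words of length `n` that may follow a free context. -/
def freeCount : ℕ → ℕ
  | 0 => 1
  | n + 1 => 4 * freeCount n + 3 * restrictedCount n

/-- The number of words of length `n` that may follow a restricted context. -/
def restrictedCount : ℕ → ℕ
  | 0 => 1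
  | n + 1 => 3 * freeCount n + restrictedCount n

end

theorem card_allowed_restricted (a : Option (Fin 8)) (b : Fin 8) :
    #{x | otSystem.Allowed (a, some b) x ∧ IsRestricted (some b, some x)} =
      if IsRestricted (a, some b) then 1 else 3 := by
  decide +revert +kernel

theorem card_allowed_free (a : Option (Fin 8)) (b : Fin 8) :
    #{x | otSystem.Allowed (a, some b) x ∧ ¬ IsRestricted (some b, some x)} =
      if IsRestricted (a, some b) then 3 else 4 := by
  decide +revert +kernel

theorem otSystem_count (n : ℕ) (a : Option (Fin 8)) (b : Fin 8) :
    otSystem.count n (a, some b) =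
      if IsRestricted (a, some b) then restrictedCount n else freeCount n := by
  induction n generalizing a b with
  | zero => simp [freeCount, restrictedCount]
  | succ n ih =>
    calc otSystem.count (n + 1) (a, some b)
        = ∑ x with otSystem.Allowed (a, some b) x, otSystem.count n (some b, some x) :=
          otSystem.count_succ n _
      _ = (if IsRestricted (a, some b) then 1 else 3) * restrictedCount n +
            (if IsRestricted (a, some b) then 3 else 4) * freeCount n := by
          simp only [ih, sum_filter_ite_const, card_allowed_restricted, card_allowed_free]
      _ = _ := by
          split_ifs <;> simp only [freeCount, restrictedCount] <;> ring

theorem N8_succ (n : ℕ) : N8 (n + 1) = 2 * restrictedCount n + 6 * freeCount n := by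
  have hfree : #{x | otSystem.Allowed (none, none) x ∧ ¬ IsRestricted (none, some x)} = 6 := by
    decide
  have hrestricted : #{x | otSystem.Allowed (none, none) x ∧ IsRestricted (none, some x)} = 2 := by
    decide
  calc N8 (n + 1)
      = otSystem.count (n + 1) (none, none) := by
        simp [N8, ConstrainedSystem.count, otadmR_iff_isAdmissible]
    _ = ∑ x with otSystem.Allowed (none, none) x, otSystem.count n (none, some x) :=
        otSystem.count_succ n _
    _ = 2 * restrictedCount n + 6 * freeCount n := by
        simp only [otSystem_count, sum_filter_ite_const, hrestricted, hfree]

theorem N8_eq_two_mul_restrictedCount (n : ℕ) : N8 n = 2 * restrictedCount n := by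
  cases n with
  | zero => rfl
  | succ n => rw [N8_succ, restrictedCount]; ring

/-- `θ₁` as a function of the context and the symbol rather than of a word and a position, so that
the merging rules become finitely many cases. -/
def theta1 (s : Context) (x : Fin 8) : ℕ :=
  4 * (yRule s.1 s.2 x).1 + 2 * (yRule s.1 s.2 x).2.1 + (yRule s.1 s.2 x).2.2.1

/-- `θ₂` as a function of the context and the symbol, like `theta1`. -/
def theta2 (s : Context) (x : Fin 8) : ℕ :=
  2 * (yRule s.1 s.2 x).2.2.2.1 + (yRule s.1 s.2 x).2.2.2.2

theorem card_allowed_lt_free_add_theta1 {s : Context} {x : Fin 8} (hx : otSystem.Allowed s x) :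
    #{y | (otSystem.Allowed s y ∧ y < x) ∧ ¬ IsRestricted (s.2, some y)} + theta1 s x = x := by
  decide +revert +kernel

theorem card_allowed_lt_restricted {s : Context} {x : Fin 8} (hx : otSystem.Allowed s x) :
    #{y | (otSystem.Allowed s y ∧ y < x) ∧ IsRestricted (s.2, some y)} = theta2 s x := by
  decide +revert +kernel

theorem sum_count_allowed_lt (n : ℕ) {s : Context} {x : Fin 8} (hx : otSystem.Allowed s x) :
    ((∑ y with otSystem.Allowed s y ∧ y < x, otSystem.count n (otSystem.next s y) : ℕ) : ℚ) =
      ((x : ℕ) - theta1 s x) / 6 * N8 (n + 1) +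
        (theta1 s x + 3 * theta2 s x - (x : ℕ)) / 6 * N8 n := by
  have hsum : ∑ y with otSystem.Allowed s y ∧ y < x, otSystem.count n (otSystem.next s y) =
      theta2 s x * restrictedCount n +
        #{y | (otSystem.Allowed s y ∧ y < x) ∧ ¬ IsRestricted (s.2, some y)} * freeCount n := by
    rw [← card_allowed_lt_restricted hx, ← sum_filter_ite_const]
    exact sum_congr rfl fun y _ => otSystem_count n s.2 y
  rw [hsum, N8_succ, N8_eq_two_mul_restrictedCount, ← card_allowed_lt_free_add_theta1 hx]
  push_cast
  ring

end EnumerativeCoding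

theorem ot_encoding_decoding_rule (m : ℕ) (hm : 1 ≤ m) (c : Fin m → Fin 8)
    (hc : OTadmR c) :
    (gIndex c : ℚ) =
      ∑ i : Fin m,
        ((((c i : ℕ) : ℚ) - (otTheta1 c i : ℚ)) / 6 * (N8 ((i : ℕ) + 1) : ℚ) +
          (((otTheta1 c i : ℚ) + 3 * (otTheta2 c i : ℚ) - ((c i : ℕ) : ℚ)) / 6) *
            (N8 (i : ℕ) : ℚ)) := by
  have hadm : otSystem.IsAdmissible (none, none) c := (otadmR_iff_isAdmissible c).1 hc
  rw [gIndex_eq_rank, otSystem.rank_eq_sum hadm, Nat.cast_sum]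
  refine Finset.sum_congr rfl fun i _ => ?_
  rw [sum_count_allowed_lt i (hadm i), otSystem_stateAt]
  rfl

end OTLOCO
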